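/- Let X be a countable data domain, A : X^n → Y an (ε,δ)-differentially private algorithm, and X = (X₁,…,X_n) ~ P^n. For δ̂ > 0, define G_i(δ̂) as the set of pairs (a, x₁^i) such that both (a, x₁^{i−1}) ∈ E_i(δ̂) and (a, x₁^i) ∈ F_i. Then for each i ∈ {1,…,n}, Pr[ (A(X), X₁^i) ∈ G_i(δ̂) ] ≥ 1 − δ' − δ'', where δ' = 2δ/δ̂ + 2δ/(1 − e^{−ε}) and δ'' = 2δ̂/(1 − e^{−3ε}). -/

import Mathlib

open scoped ENNReal

/-- The probability that a sample from the probability mass function `μ` lands in `S`. -/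
noncomputable def prob {α : Type*} (μ : PMF α) (S : Set α) : ℝ :=
  (μ.toOuterMeasure S).toReal

/-- The independent coupling of two distributions: a pair whose components are independent
with the given marginal distributions. -/
noncomputable def indepPair {α β : Type*} (p : PMF α) (q : PMF β) : PMF (α × β) :=
  p.bind fun a => q.map fun b => (a, b)

/-- `MaxInfoLe μ b k` : the `b`-approximate max-information of the joint distribution `μ`
is at most `k` (measured in bits):  for every event `O` with `Pr[(X,Z) ∈ O] > b`,
`Pr[(X,Z) ∈ O] - b ≤ 2^k · Pr[X ⊗ Z ∈ O]`. -/
def MaxInfoLe {α β : Type*} (μ : PMF (α × β)) (b k : ℝ) : Prop :=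
  ∀ O : Set (α × β), b < prob μ O →
    prob μ O - b ≤ 2 ^ k * prob (indepPair (μ.map Prod.fst) (μ.map Prod.snd)) O

/-- The `n`-fold product (i.i.d.) distribution `P^n` on datasets of size `n`. -/
noncomputable def iidPMF {X : Type*} (P : PMF X) : (n : ℕ) → PMF (Fin n → X)
  | 0 => PMF.pure (fun i => i.elim0)
  | n + 1 => P.bind fun a => (iidPMF P n).map fun x => Fin.cons a x

/-- The joint distribution of `(X, A(X))` where `X ∼ μ` and `A` is a randomized algorithm. -/
noncomputable def jointPMF {D Y : Type*} (μ : PMF D) (A : D → PMF Y) : PMF (D × Y) :=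
  μ.bind fun x => (A x).map fun y => (x, y)
/-- Two datasets are neighboring if they differ in at most one entry. -/
def Neighbor {X : Type*} {n : ℕ} (x x' : Fin n → X) : Prop :=
  ∃ i : Fin n, ∀ j : Fin n, j ≠ i → x j = x' j

/-- `(ε,δ)`-differential privacy of a randomized algorithm `A` on datasets of size `n`. -/
def DiffPrivate {X Y : Type*} {n : ℕ} (A : (Fin n → X) → PMF Y) (ε δ : ℝ) : Prop :=
  ∀ x x' : Fin n → X, Neighbor x x' → ∀ O : Set Y,
    prob (A x) O ≤ Real.exp ε * prob (A x') O + δ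

/-- `PrefixEq i w x` : the dataset `x` agrees with `w` on all coordinates before `i`
(i.e. `x` has prefix `x₁^{i-1} = w₁^{i-1}`). -/
def PrefixEq {X : Type*} {n : ℕ} (i : Fin n) (w x : Fin n → X) : Prop :=
  ∀ j : Fin n, (j : ℕ) < (i : ℕ) → x j = w j

/-- The conditional probability `Pr[X_i ∈ O | A(X) = a, X₁^{i-1} = w₁^{i-1}]`, computed from the
joint distribution `μ` of the pair `(X, A(X))`. -/
noncomputable def condXi {X Y : Type*} {n : ℕ} (μ : PMF ((Fin n → X) × Y)) (i : Fin n)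
    (a : Y) (w : Fin n → X) (O : Set X) : ℝ :=
  prob μ {p | p.2 = a ∧ PrefixEq i w p.1 ∧ p.1 i ∈ O} /
    prob μ {p | p.2 = a ∧ PrefixEq i w p.1}

/-- `(ε,δ)`-indistinguishability of two distributions presented as set functions. -/
def IndistFn {D : Type*} (F G : Set D → ℝ) (ε δ : ℝ) : Prop :=
  ∀ O : Set D, F O ≤ Real.exp ε * G O + δ ∧ G O ≤ Real.exp ε * F O + δ

/-- The set `E_i(δ̂)` of "good" output/prefix pairs `(a, x₁^{i-1})`: those for which the marginal
distribution of `X_i` is `(3ε, δ̂)`-indistinguishable from the conditional distribution of `X_i`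
given `A(X) = a` and `X₁^{i-1} = x₁^{i-1}`. -/
def Eset {X Y : Type*} {n : ℕ} (μ : PMF ((Fin n → X) × Y)) (P : PMF X) (i : Fin n)
    (ε δhat : ℝ) : Set (Y × (Fin n → X)) :=
  {q | IndistFn (fun O => prob P O) (fun O => condXi μ i q.1 q.2 O) (3 * ε) δhat}

/-- The set `F_i` of output/prefix pairs `(a, x₁^i)` for which the likelihood ratio
`Pr[X_i = x_i | a, x₁^{i-1}] / Pr[X_i = x_i]` lies in `[e^{-6ε}, e^{6ε}]`. -/
def Fset {X Y : Type*} {n : ℕ} (μ : PMF ((Fin n → X) × Y)) (P : PMF X) (i : Fin n)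
    (ε : ℝ) : Set (Y × (Fin n → X)) :=
  {q | Real.exp (-(6 * ε)) ≤ condXi μ i q.1 q.2 {q.2 i} / (P (q.2 i)).toReal ∧
       condXi μ i q.1 q.2 {q.2 i} / (P (q.2 i)).toReal ≤ Real.exp (6 * ε)}

/-- `Z_i(a, x₁^i) = log₂( Pr[X_i = x_i | a, x₁^{i-1}] / Pr[X_i = x_i] )`. -/
noncomputable def Zi {X Y : Type*} {n : ℕ} (μ : PMF ((Fin n → X) × Y)) (P : PMF X)
    (i : Fin n) (q : Y × (Fin n → X)) : ℝ :=
  Real.logb 2 (condXi μ i q.1 q.2 {q.2 i} / (P (q.2 i)).toReal)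

/-- The set `G_i(δ̂)` of "good" tuples: `(a, x₁^{i-1}) ∈ E_i(δ̂)` and `(a, x₁^i) ∈ F_i`. -/
def Gset {X Y : Type*} {n : ℕ} (μ : PMF ((Fin n → X) × Y)) (P : PMF X) (i : Fin n)
    (ε δhat : ℝ) : Set (Y × (Fin n → X)) :=
  {q | q ∈ Eset μ P i ε δhat ∧ q ∈ Fset μ P i ε}

/-- `G_{≤ i}(δ̂)` : membership in `G_j(δ̂)` for every `j ≤ i`. -/
def GleSet {X Y : Type*} {n : ℕ} (μ : PMF ((Fin n → X) × Y)) (P : PMF X) (i : Fin n)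
    (ε δhat : ℝ) : Set (Y × (Fin n → X)) :=
  {q | ∀ j : Fin n, j ≤ i → q ∈ Gset μ P j ε δhat}

/-- `T_i(a, x₁^i)` equals `Z_i(a, x₁^i)` on the good set `G_{≤ i}(δ̂)` and `0` otherwise. -/
noncomputable def Ti {X Y : Type*} {n : ℕ} (μ : PMF ((Fin n → X) × Y)) (P : PMF X)
    (i : Fin n) (ε δhat : ℝ) : (Y × (Fin n → X)) → ℝ :=
  (GleSet μ P i ε δhat).indicator (Zi μ P i)

/-!
Expose the pair `((A(X), X₁^{i-1}), X_i)`. Since the entries are i.i.d., replacing `X_i` in it by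
a fresh sample from `P` is the same as running `A` on a dataset with its `i`-th entry resampled, so
by differential privacy the exposed pair is `(ε, δ)`-indistinguishable from the independent pair
`(A(X), X₁^{i-1}) ⊗ P`. Conditioning on the first component, the events that witness a violation of
`(ε, δ̂)`-indistinguishability glue to a single event about the pair, which is a violation of size
`δ̂` times the probability of a bad condition; the latter is therefore at most `2δ/δ̂`. On the other
conditions, a conditional law that is `(3ε, δ̂)`-indistinguishable from `P` has likelihood ratio
within `e^{±6ε}` up to probability `2δ̂/(1 - e^{-3ε})`, because on the set where the ratio is larger
than `e^{6ε}` (or smaller than `e^{-6ε}`) the two laws differ by a factor exceeding `e^{3ε}`.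
-/

open Real

section

variable {α β T W X Y : Type*}

section Prob

lemma prob_eq_measureReal (μ : PMF α) (S : Set α) :
    prob μ S = (@PMF.toMeasure α ⊤ μ).real S := by
  let _ : MeasurableSpace α := ⊤
  rw [prob, MeasureTheory.measureReal_def,
    μ.toMeasure_apply_eq_toOuterMeasure_apply (s := S) trivial]

lemma prob_univ (μ : PMF α) : prob μ Set.univ = 1 := by
  rw [prob, (μ.toOuterMeasure_apply_eq_one_iff _).2 (Set.subset_univ _), ENNReal.toReal_one]

lemma prob_nonneg (μ : PMF α) (S : Set α) : 0 ≤ prob μ S :=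
  ENNReal.toReal_nonneg

lemma prob_le_one (μ : PMF α) (S : Set α) : prob μ S ≤ 1 := by
  let _ : MeasurableSpace α := ⊤
  simpa only [prob_eq_measureReal] using
    MeasureTheory.measureReal_le_one (μ := μ.toMeasure) (s := S)

lemma prob_union_le (μ : PMF α) (S S' : Set α) : prob μ (S ∪ S') ≤ prob μ S + prob μ S' := by
  let _ : MeasurableSpace α := ⊤
  simpa only [prob_eq_measureReal] using MeasureTheory.measureReal_union_le S S'

lemma prob_compl (μ : PMF α) (S : Set α) : prob μ Sᶜ = 1 - prob μ S := by
  let _ : MeasurableSpace α := ⊤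
  simpa only [prob_eq_measureReal] using
    MeasureTheory.probReal_compl_eq_one_sub (μ := μ.toMeasure) (s := S) trivial

lemma hasSum_prob (μ : PMF α) (S : Set α) :
    HasSum (S.indicator fun a => (μ a).toReal) (prob μ S) := by
  have h := ENNReal.hasSum_toReal (μ.tsum_coe_indicator_ne_top S)
  rw [← ENNReal.tsum_toReal_eq
    fun a => ne_top_of_le_ne_top (μ.apply_ne_top a) (Set.indicator_le_self S μ a)] at h
  rw [prob, PMF.toOuterMeasure_apply]
  convert h using 1
  funext a
  by_cases ha : a ∈ S <;> simp [ha]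

lemma hasSum_toReal_one (μ : PMF α) : HasSum (fun a => (μ a).toReal) 1 := by
  simpa only [prob_univ, Set.indicator_univ] using hasSum_prob μ Set.univ

lemma prob_mono_of_inter_support_subset {μ : PMF α} {S S' : Set α} (h : S ∩ μ.support ⊆ S') :
    prob μ S ≤ prob μ S' := by
  have hle := μ.toOuterMeasure_mono h
  have htop : μ.toOuterMeasure S' ≠ ⊤ := by
    rw [PMF.toOuterMeasure_apply]
    exact μ.tsum_coe_indicator_ne_top S'
  exact ENNReal.toReal_mono htop hle

lemma prob_singleton (μ : PMF α) (a : α) : prob μ {a} = (μ a).toReal := by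
  rw [prob, PMF.toOuterMeasure_apply_singleton]

lemma prob_map (μ : PMF α) (f : α → β) (S : Set β) : prob (μ.map f) S = prob μ (f ⁻¹' S) := by
  rw [prob, PMF.toOuterMeasure_map_apply, prob]

lemma hasSum_prob_bind (μ : PMF α) (f : α → PMF β) (S : Set β) :
    HasSum (fun a => (μ a).toReal * prob (f a) S) (prob (μ.bind f) S) := by
  have hne : ∑' a, μ a * (f a).toOuterMeasure S ≠ ⊤ := by
    rw [← PMF.toOuterMeasure_bind_apply, PMF.toOuterMeasure_apply]
    exact (μ.bind f).tsum_coe_indicator_ne_top S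
  rw [prob, PMF.toOuterMeasure_bind_apply,
    ENNReal.tsum_toReal_eq (ENNReal.ne_top_of_tsum_ne_top hne)]
  simpa only [prob, ENNReal.toReal_mul] using ENNReal.hasSum_toReal hne

lemma mul_prob_le_of_forall_mem {p q : PMF α} {S : Set α} {c : ℝ}
    (h : ∀ a ∈ S, c * (p a).toReal ≤ (q a).toReal) : c * prob p S ≤ prob q S := by
  refine hasSum_le (fun a => ?_) ((hasSum_prob p S).mul_left c) (hasSum_prob q S)
  by_cases ha : a ∈ S
  · simpa only [Set.indicator_of_mem ha] using h a ha
  · simp only [Set.indicator_of_notMem ha, mul_zero, le_refl]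

lemma prob_bind_le {μ : PMF T} {f : T → PMF α} {g : T → PMF β} {S : Set α} {S' : Set β} {c d : ℝ}
    (h : ∀ t, prob (f t) S ≤ c * prob (g t) S' + d) :
    prob (μ.bind f) S ≤ c * prob (μ.bind g) S' + d := by
  have hsum := ((hasSum_prob_bind μ g S').mul_left c).add ((hasSum_toReal_one μ).mul_right d)
  rw [one_mul] at hsum
  refine hasSum_le (fun t => ?_) (hasSum_prob_bind μ f S) hsum
  calc (μ t).toReal * prob (f t) S
      ≤ (μ t).toReal * (c * prob (g t) S' + d) := by gcongr; exact h t
    _ = c * ((μ t).toReal * prob (g t) S') + (μ t).toReal * d := by ring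

end Prob

section Joint

lemma hasSum_prob_jointPMF (μ : PMF T) (K : T → PMF α) (S : Set (T × α)) :
    HasSum (fun t => (μ t).toReal * prob (K t) (Prod.mk t ⁻¹' S)) (prob (jointPMF μ K) S) := by
  simpa only [prob_map, jointPMF] using hasSum_prob_bind μ (fun t => (K t).map (Prod.mk t)) S

lemma prob_jointPMF_fst_eq_and (μ : PMF T) (K : T → PMF α) (t : T) (O : Set α) :
    prob (jointPMF μ K) {z | z.1 = t ∧ z.2 ∈ O} = (μ t).toReal * prob (K t) O := by
  refine (hasSum_prob_jointPMF μ K _).unique ?_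
  convert hasSum_single t fun s hs => ?_ using 1
  · simp
  · simp [prob, hs]

lemma prob_jointPMF_le_add {μ : PMF T} {K : T → PMF α} {B : Set T} {S : Set (T × α)} {c : ℝ}
    (hc : 0 ≤ c) (h : ∀ t ∉ B, prob (K t) (Prod.mk t ⁻¹' S) ≤ c) :
    prob (jointPMF μ K) S ≤ prob μ B + c := by
  have hpointwise (t : T) : prob ((K t).map (Prod.mk t)) S ≤ 1 * prob (PMF.pure t) B + c := by
    rw [prob_map, one_mul]
    by_cases ht : t ∈ B
    · have hone : prob (PMF.pure t) B = 1 := by simp [prob, ht]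
      linarith [prob_le_one (K t) (Prod.mk t ⁻¹' S)]
    · linarith [h t ht, prob_nonneg (PMF.pure t) B]
  simpa only [jointPMF, PMF.bind_pure, one_mul] using prob_bind_le (μ := μ) hpointwise

lemma jointPMF_apply (μ : PMF T) (K : T → PMF α) (z : T × α) :
    jointPMF μ K z = μ z.1 * K z.1 z.2 := by
  classical
  obtain ⟨t, u⟩ := z
  rw [jointPMF, PMF.bind_apply, tsum_eq_single t fun s hs => by simp [PMF.map_apply, hs.symm],
    PMF.map_apply, tsum_eq_single u fun v hv => by simp [hv.symm], if_pos rfl]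

lemma indepPair_apply (p : PMF α) (q : PMF β) (z : α × β) : indepPair p q z = p z.1 * q z.2 :=
  jointPMF_apply p (fun _ => q) z

lemma map_fst_apply (J : PMF (T × α)) (t : T) : J.map Prod.fst t = ∑' u, J (t, u) := by
  classical
  rw [PMF.map_apply, ENNReal.tsum_prod', tsum_eq_single t fun s hs => by simp [hs.symm]]
  simp

lemma exists_eq_jointPMF_map_fst (J : PMF (T × α)) :
    ∃ K : T → PMF α, J = jointPMF (J.map Prod.fst) K := by
  have hcond (t : T) : ∃ q : PMF α, ∀ u, J (t, u) = J.map Prod.fst t * q u := by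
    have htop := (J.map Prod.fst).apply_ne_top t
    by_cases ht : J.map Prod.fst t = 0
    · refine ⟨J.map Prod.snd, fun u => ?_⟩
      rw [ht, zero_mul]
      exact ENNReal.tsum_eq_zero.1 (map_fst_apply J t ▸ ht) u
    · rw [map_fst_apply] at ht htop ⊢
      refine ⟨PMF.normalize (fun u => J (t, u)) ht htop, fun u => ?_⟩
      rw [PMF.normalize_apply, mul_left_comm, ENNReal.mul_inv_cancel ht htop, mul_one]
  choose K hK using hcond
  exact ⟨K, PMF.ext fun z => by rw [jointPMF_apply, hK]⟩

end Joint

namespace IndistFn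

lemma symm {F G : Set α → ℝ} {ε δ : ℝ} (h : IndistFn F G ε δ) : IndistFn G F ε δ :=
  fun O => (h O).symm

lemma mono_left {p q : PMF α} {ε ε' δ : ℝ} (h : IndistFn (prob p) (prob q) ε δ)
    (hε : ε ≤ ε') : IndistFn (prob p) (prob q) ε' δ := by
  have hexp (r : PMF α) (O : Set α) : exp ε * prob r O + δ ≤ exp ε' * prob r O + δ := by
    gcongr
    exact prob_nonneg r O
  exact fun O => ⟨(h O).1.trans (hexp q O), (h O).2.trans (hexp p O)⟩

lemma map {p q : PMF α} {ε δ : ℝ} (h : IndistFn (prob p) (prob q) ε δ) (f : α → β) :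
    IndistFn (prob (p.map f)) (prob (q.map f)) ε δ := by
  intro O
  simpa only [prob_map] using h (f ⁻¹' O)

lemma bind {μ : PMF T} {f g : T → PMF α} {ε δ : ℝ}
    (h : ∀ t, IndistFn (prob (f t)) (prob (g t)) ε δ) :
    IndistFn (prob (μ.bind f)) (prob (μ.bind g)) ε δ :=
  fun O => ⟨prob_bind_le fun t => (h t O).1, prob_bind_le fun t => (h t O).2⟩

end IndistFn

section LikelihoodRatio

variable {p q : PMF α} {ε η δ : ℝ}

/-- The points at which the likelihood ratio `q u / p u` lies in `[e^{-η}, e^η]`. Points with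
`p u = 0` are excluded, because there the ratio is `0` by convention. -/
def likelihoodRatioWithin (p q : PMF α) (η : ℝ) : Set α :=
  {u | exp (-η) ≤ (q u).toReal / (p u).toReal ∧ (q u).toReal / (p u).toReal ≤ exp η}

lemma compl_likelihoodRatioWithin_inter_support_subset :
    (likelihoodRatioWithin p q η)ᶜ ∩ q.support ⊆
      {u | exp η * (p u).toReal ≤ (q u).toReal} ∪ {u | exp η * (q u).toReal ≤ (p u).toReal} := by
  rintro u ⟨hu, hqu⟩
  by_contra hnot
  simp only [Set.mem_union, Set.mem_ofPred_eq, not_or, not_le] at hnot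
  obtain ⟨hq_lt, hp_lt⟩ := hnot
  have hq_pos : 0 < (q u).toReal := ENNReal.toReal_pos hqu (q.apply_ne_top u)
  have hp_pos : 0 < (p u).toReal :=
    pos_of_mul_pos_right (hq_pos.trans hq_lt) (exp_pos η).le
  refine hu ⟨?_, (div_le_iff₀ hp_pos).2 hq_lt.le⟩
  rw [exp_neg, le_div_iff₀ hp_pos, inv_mul_le_iff₀ (exp_pos η)]
  exact hp_lt.le

lemma IndistFn.prob_le_of_exp_mul_le (h : IndistFn (prob p) (prob q) ε δ) (hεη : ε < η)
    {S : Set α} (hS : ∀ u ∈ S, exp η * (p u).toReal ≤ (q u).toReal) :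
    prob q S ≤ δ / (1 - exp (-(η - ε))) := by
  have hlt : exp (-(η - ε)) < 1 := exp_lt_one_iff.2 (by linarith)
  have hratio : exp ε * prob p S ≤ exp (-(η - ε)) * prob q S := by
    calc exp ε * prob p S = exp (-(η - ε)) * (exp η * prob p S) := by
          rw [← mul_assoc, ← exp_add]; ring_nf
      _ ≤ exp (-(η - ε)) * prob q S := by gcongr; exact mul_prob_le_of_forall_mem hS
  rw [le_div_iff₀ (by linarith)]
  linarith [(h S).2]

theorem IndistFn.prob_compl_likelihoodRatioWithin_le (h : IndistFn (prob p) (prob q) ε δ)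
    (hη : 0 ≤ η) (hεη : ε < η) :
    prob q (likelihoodRatioWithin p q η)ᶜ ≤ 2 * δ / (1 - exp (-(η - ε))) := by
  set high : Set α := {u | exp η * (p u).toReal ≤ (q u).toReal}
  set low : Set α := {u | exp η * (q u).toReal ≤ (p u).toReal}
  have hhigh : prob q high ≤ δ / (1 - exp (-(η - ε))) :=
    h.prob_le_of_exp_mul_le hεη fun u hu => hu
  have hlow : prob q low ≤ δ / (1 - exp (-(η - ε))) := by
    calc prob q low ≤ exp η * prob q low :=
          le_mul_of_one_le_left (prob_nonneg q low) (one_le_exp hη)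
      _ ≤ prob p low := mul_prob_le_of_forall_mem fun u hu => hu
      _ ≤ δ / (1 - exp (-(η - ε))) := h.symm.prob_le_of_exp_mul_le hεη fun u hu => hu
  calc prob q (likelihoodRatioWithin p q η)ᶜ
      ≤ prob q (high ∪ low) :=
        prob_mono_of_inter_support_subset compl_likelihoodRatioWithin_inter_support_subset
    _ ≤ prob q high + prob q low := prob_union_le q high low
    _ ≤ 2 * δ / (1 - exp (-(η - ε))) := by rw [two_mul, add_div]; exact add_le_add hhigh hlow

end LikelihoodRatio

section Conditioning

variable {μ : PMF T} {K L : T → PMF α} {ε η δ δ' c : ℝ}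

lemma prob_exists_mul_add_lt_le
    (h : ∀ S, prob (jointPMF μ K) S ≤ c * prob (jointPMF μ L) S + δ) (hδ' : 0 < δ') :
    prob μ {t | ∃ O, c * prob (L t) O + δ' < prob (K t) O} ≤ δ / δ' := by
  set B := {t | ∃ O, c * prob (L t) O + δ' < prob (K t) O}
  have hwitness : ∀ t ∈ B, ∃ O, c * prob (L t) O + δ' < prob (K t) O := fun t ht => ht
  choose! O hO using hwitness
  set S : Set (T × α) := {z | z.1 ∈ B ∧ z.2 ∈ O z.1}
  have hgap : c * prob (jointPMF μ L) S + δ' * prob μ B ≤ prob (jointPMF μ K) S := by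
    refine hasSum_le (fun t => ?_)
      (((hasSum_prob_jointPMF μ L S).mul_left c).add ((hasSum_prob μ B).mul_left δ'))
      (hasSum_prob_jointPMF μ K S)
    by_cases ht : t ∈ B
    · have hslice : Prod.mk t ⁻¹' S = O t := by ext u; simp [S, ht]
      rw [hslice, Set.indicator_of_mem ht]
      calc c * ((μ t).toReal * prob (L t) (O t)) + δ' * (μ t).toReal
          = (μ t).toReal * (c * prob (L t) (O t) + δ') := by ring
        _ ≤ (μ t).toReal * prob (K t) (O t) := by gcongr; exact (hO t ht).le
    · have hslice : Prod.mk t ⁻¹' S = ∅ := by ext u; simp [S, ht]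
      simp [hslice, ht, prob]
  rw [le_div_iff₀ hδ']
  linarith [h S]

theorem prob_not_indistFn_le (h : IndistFn (prob (jointPMF μ K)) (prob (jointPMF μ L)) ε δ)
    (hδ' : 0 < δ') :
    prob μ {t | ¬ IndistFn (prob (K t)) (prob (L t)) ε δ'} ≤ 2 * δ / δ' := by
  have hsubset : {t | ¬ IndistFn (prob (K t)) (prob (L t)) ε δ'} ⊆
      {t | ∃ O, exp ε * prob (L t) O + δ' < prob (K t) O} ∪
        {t | ∃ O, exp ε * prob (K t) O + δ' < prob (L t) O} := by
    intro t ht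
    simp only [IndistFn, Set.mem_ofPred_eq, not_forall, not_and_or, not_le] at ht
    exact exists_or.1 ht
  calc _ ≤ _ := prob_mono_of_inter_support_subset (Set.inter_subset_left.trans hsubset)
    _ ≤ _ := prob_union_le _ _ _
    _ ≤ δ / δ' + δ / δ' := add_le_add (prob_exists_mul_add_lt_le (fun S => (h S).1) hδ')
        (prob_exists_mul_add_lt_le (fun S => (h S).2) hδ')
    _ = 2 * δ / δ' := by ring

theorem one_sub_le_prob_indistFn_and_mem_likelihoodRatioWithin
    (h : IndistFn (prob (jointPMF μ L)) (prob (jointPMF μ K)) ε δ) (hδ' : 0 < δ')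
    (hη : 0 ≤ η) (hεη : ε < η) :
    1 - 2 * δ / δ' - 2 * δ' / (1 - exp (-(η - ε))) ≤
      prob (jointPMF μ K) {z | IndistFn (prob (L z.1)) (prob (K z.1)) ε δ' ∧
        z.2 ∈ likelihoodRatioWithin (L z.1) (K z.1) η} := by
  set good : Set (T × α) := {z | IndistFn (prob (L z.1)) (prob (K z.1)) ε δ' ∧
    z.2 ∈ likelihoodRatioWithin (L z.1) (K z.1) η}
  have hlt : exp (-(η - ε)) < 1 := exp_lt_one_iff.2 (by linarith)
  have hbad : prob (jointPMF μ K) goodᶜ ≤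
      prob μ {t | ¬ IndistFn (prob (L t)) (prob (K t)) ε δ'} +
        2 * δ' / (1 - exp (-(η - ε))) := by
    refine prob_jointPMF_le_add (div_nonneg (by linarith) (by linarith)) fun t ht => ?_
    have hindist : IndistFn (prob (L t)) (prob (K t)) ε δ' := not_not.1 ht
    have hslice : Prod.mk t ⁻¹' goodᶜ = (likelihoodRatioWithin (L t) (K t) η)ᶜ := by
      ext u; simp [good, hindist]
    rw [hslice]
    exact hindist.prob_compl_likelihoodRatioWithin_le hη hεη
  rw [prob_compl] at hbad
  linarith [prob_not_indistFn_le h hδ']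

end Conditioning

section Resampling

lemma map_equiv_apply (p : PMF α) (e : α ≃ β) (b : β) : p.map e b = p (e.symm b) := by
  classical
  rw [PMF.map_apply, tsum_eq_single (e.symm b) fun a ha => if_neg fun h => ha (by simp [h])]
  simp

lemma iidPMF_succ (P : PMF X) (n : ℕ) :
    iidPMF P (n + 1) = (indepPair P (iidPMF P n)).map (Fin.consEquiv fun _ => X) := by
  simp only [iidPMF, indepPair, PMF.map_bind, PMF.map_comp]
  rfl

lemma iidPMF_apply (P : PMF X) (n : ℕ) (x : Fin n → X) : iidPMF P n x = ∏ j, P (x j) := by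
  induction n with
  | zero => simp [iidPMF, PMF.pure_apply, Subsingleton.elim x fun i => i.elim0]
  | succ n ih =>
    rw [iidPMF_succ, map_equiv_apply, indepPair_apply, ih, Fin.prod_univ_succ]
    rfl

variable {n : ℕ}

/-- The involution of `X^n × X` exchanging the `i`-th entry of the dataset with the spare one. -/
def swapEntry (i : Fin n) : (Fin n → X) × X ≃ (Fin n → X) × X :=
  Function.Involutive.toPerm (fun z => (Function.update z.1 i z.2, z.1 i)) fun z => by simp

lemma swapEntry_apply (i : Fin n) (z : (Fin n → X) × X) :
    swapEntry i z = (Function.update z.1 i z.2, z.1 i) :=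
  rfl

lemma map_swapEntry_indepPair_iidPMF (P : PMF X) (i : Fin n) :
    (indepPair (iidPMF P n) P).map (swapEntry i) = indepPair (iidPMF P n) P := by
  ext ⟨x, u⟩
  rw [map_equiv_apply]
  change indepPair (iidPMF P n) P (Function.update x i u, x i) = _
  simp only [indepPair_apply, iidPMF_apply]
  rw [Fintype.prod_eq_mul_prod_compl i, Fintype.prod_eq_mul_prod_compl i fun j => P (x j),
    Finset.prod_congr rfl fun j hj => by
      rw [Function.update_of_ne (by simpa using hj)], Function.update_self]
  ring

/-- The algorithm that runs `A` after replacing the `i`-th entry of its input by a fresh sample. -/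
noncomputable def resampleEntry (A : (Fin n → X) → PMF Y) (P : PMF X) (i : Fin n)
    (x : Fin n → X) : PMF Y :=
  P.bind fun u => A (Function.update x i u)

lemma indepPair_map_jointPMF_iidPMF (A : (Fin n → X) → PMF Y) (P : PMF X) (i : Fin n)
    {r : (Fin n → X) → W} (hr : ∀ x u, r (Function.update x i u) = r x) :
    indepPair ((jointPMF (iidPMF P n) A).map fun z => (z.2, r z.1)) P =
      (jointPMF (iidPMF P n) (resampleEntry A P i)).map fun z => ((z.2, r z.1), z.1 i) := by
  let law (z : (Fin n → X) × X) : PMF ((Y × W) × X) := (A z.1).map fun y => ((y, r z.1), z.2)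
  calc indepPair ((jointPMF (iidPMF P n) A).map fun z => (z.2, r z.1)) P
      = (indepPair (iidPMF P n) P).bind law := by
        simp only [indepPair, jointPMF, law, PMF.map, PMF.bind_bind, PMF.pure_bind,
          Function.comp_def]
        congr 1
        funext x
        exact PMF.bind_comm _ _ _
    _ = (indepPair (iidPMF P n) P).bind (law ∘ swapEntry i) := by
        rw [← PMF.bind_map, map_swapEntry_indepPair_iidPMF]
    _ = (jointPMF (iidPMF P n) (resampleEntry A P i)).map fun z => ((z.2, r z.1), z.1 i) := by
        simp only [indepPair, jointPMF, resampleEntry, law, swapEntry_apply, PMF.map,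
          PMF.bind_bind, PMF.pure_bind, Function.comp_def, hr]

end Resampling

namespace DiffPrivate

variable {n : ℕ} {A : (Fin n → X) → PMF Y} {ε δ : ℝ}

lemma nonneg (hA : DiffPrivate A ε δ) (i : Fin n) (x : Fin n → X) : 0 ≤ δ := by
  simpa [prob] using hA x x ⟨i, fun _ _ => rfl⟩ ∅

lemma indistFn_resampleEntry (hA : DiffPrivate A ε δ) (P : PMF X) (i : Fin n) (x : Fin n → X) :
    IndistFn (prob (resampleEntry A P i x)) (prob (A x)) ε δ := by
  rw [← P.bind_const (A x)]
  refine IndistFn.bind fun u O => ⟨hA _ _ ⟨i, fun j hj => ?_⟩ O, hA _ _ ⟨i, fun j hj => ?_⟩ O⟩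
  · rw [Function.update_of_ne hj]
  · rw [Function.update_of_ne hj]

theorem indistFn_indepPair (hA : DiffPrivate A ε δ) (P : PMF X) (i : Fin n)
    {r : (Fin n → X) → W} (hr : ∀ x u, r (Function.update x i u) = r x) :
    IndistFn (prob (indepPair ((jointPMF (iidPMF P n) A).map fun z => (z.2, r z.1)) P))
      (prob ((jointPMF (iidPMF P n) A).map fun z => ((z.2, r z.1), z.1 i))) ε δ := by
  rw [indepPair_map_jointPMF_iidPMF A P i hr]
  exact (IndistFn.bind fun x =>
    (hA.indistFn_resampleEntry P i x).map (Prod.mk x)).map _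

end DiffPrivate

section ExposedEntry

variable {n : ℕ}

/-- The exposure of entry `i`: the pair `((a, x₁^{i-1}), x_i)` formed from a dataset `x` and an
output `a`, the prefix being encoded as the restriction of `x` to the indices below `i`. -/
def exposeEntry (i : Fin n) (z : (Fin n → X) × Y) : (Y × (Set.Iio i → X)) × X :=
  ((z.2, (Set.Iio i).domRestrict z.1), z.1 i)

lemma domRestrict_Iio_update (i : Fin n) (x : Fin n → X) (u : X) :
    (Set.Iio i).domRestrict (Function.update x i u) = (Set.Iio i).domRestrict x :=
  Set.domRestrict_eq_domRestrict_iff.2 fun _ hj => Function.update_of_ne (ne_of_lt hj) u x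

lemma prefixEq_iff_domRestrict_eq (i : Fin n) (w x : Fin n → X) :
    PrefixEq i w x ↔ (Set.Iio i).domRestrict x = (Set.Iio i).domRestrict w :=
  Set.domRestrict_eq_domRestrict_iff.symm

lemma condXi_eq_prob {μ : PMF ((Fin n → X) × Y)} {i : Fin n} {ν : PMF (Y × (Set.Iio i → X))}
    {K : Y × (Set.Iio i → X) → PMF X} (hK : μ.map (exposeEntry i) = jointPMF ν K)
    {a : Y} {w : Fin n → X} (hν : ν (a, (Set.Iio i).domRestrict w) ≠ 0) (O : Set X) :
    condXi μ i a w O = prob (K (a, (Set.Iio i).domRestrict w)) O := by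
  set t := (a, (Set.Iio i).domRestrict w) with ht
  have hslice (O : Set X) :
      prob μ {p | p.2 = a ∧ PrefixEq i w p.1 ∧ p.1 i ∈ O} = (ν t).toReal * prob (K t) O := by
    rw [← prob_jointPMF_fst_eq_and, ← hK, prob_map]
    congr 1
    ext z
    simp [exposeEntry, prefixEq_iff_domRestrict_eq, ht, and_assoc]
  have hmass := hslice Set.univ
  simp only [Set.mem_univ, and_true, prob_univ, mul_one] at hmass
  rw [condXi, hslice, hmass, mul_div_cancel_left₀]
  exact ENNReal.toReal_ne_zero.2 ⟨hν, ν.apply_ne_top t⟩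

lemma mem_Gset_iff {μ : PMF ((Fin n → X) × Y)} {i : Fin n} {ν : PMF (Y × (Set.Iio i → X))}
    {K : Y × (Set.Iio i → X) → PMF X} (hK : μ.map (exposeEntry i) = jointPMF ν K)
    {a : Y} {w : Fin n → X} (hν : ν (a, (Set.Iio i).domRestrict w) ≠ 0) (P : PMF X) (ε δhat : ℝ) :
    (a, w) ∈ Gset μ P i ε δhat ↔
      IndistFn (prob P) (prob (K (a, (Set.Iio i).domRestrict w))) (3 * ε) δhat ∧
        w i ∈ likelihoodRatioWithin P (K (a, (Set.Iio i).domRestrict w)) (6 * ε) := by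
  simp only [Gset, Eset, Fset, likelihoodRatioWithin, Set.mem_ofPred_eq, condXi_eq_prob hK hν,
    prob_singleton]

end ExposedEntry

theorem stmt_9_general {n : ℕ} (A : (Fin n → X) → PMF Y) (ε δ δhat : ℝ) (hε : 0 < ε)
    (hδhat : 0 < δhat) (hA : DiffPrivate A ε δ) (P : PMF X) (i : Fin n) :
    1 - 2 * δ / δhat - 2 * δhat / (1 - exp (-(3 * ε))) ≤
      prob (jointPMF (iidPMF P n) A)
        {p | (p.2, p.1) ∈ Gset (jointPMF (iidPMF P n) A) P i ε δhat} := by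
  set μ := jointPMF (iidPMF P n) A
  set ν := μ.map fun z => (z.2, (Set.Iio i).domRestrict z.1)
  have hfst : (μ.map (exposeEntry i)).map Prod.fst = ν := PMF.map_comp _ _ _
  obtain ⟨K, hK⟩ := exists_eq_jointPMF_map_fst (μ.map (exposeEntry i))
  rw [hfst] at hK
  have hindist : IndistFn (prob (indepPair ν P)) (prob (jointPMF ν K)) ε δ :=
    hK ▸ hA.indistFn_indepPair P i (domRestrict_Iio_update i)
  have hgood := one_sub_le_prob_indistFn_and_mem_likelihoodRatioWithin (η := 6 * ε)
    (L := fun _ => P) (hindist.mono_left (by linarith : ε ≤ 3 * ε)) hδhat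
    (by linarith) (by linarith)
  rw [← hK, prob_map, show 6 * ε - 3 * ε = 3 * ε by ring] at hgood
  refine hgood.trans (prob_mono_of_inter_support_subset fun z ⟨hz, hsupport⟩ => ?_)
  have hν : ν (z.2, (Set.Iio i).domRestrict z.1) ≠ 0 :=
    (PMF.mem_support_map_iff _ _ _).2 ⟨z, hsupport, rfl⟩
  exact (mem_Gset_iff hK hν P ε δhat).2 hz

end

/-- **Claim 3.6.**  If `A` is `(ε,δ)`-differentially private and `X ∼ P^n`, then
for each `i`, `Pr[(A(X), X₁^i) ∈ G_i(δ̂)] ≥ 1 - δ' - δ''` where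
`δ' = 2δ/δ̂ + 2δ/(1 - e^{-ε})` and `δ'' = 2δ̂/(1 - e^{-3ε})`. -/
theorem stmt_9 {X Y : Type*} [Countable X] {n : ℕ} (A : (Fin n → X) → PMF Y)
    (ε δ δhat : ℝ) (hε : 0 < ε) (hδhat : 0 < δhat) (hA : DiffPrivate A ε δ)
    (P : PMF X) (i : Fin n) :
    1 - (2 * δ / δhat + 2 * δ / (1 - Real.exp (-ε))) -
        2 * δhat / (1 - Real.exp (-(3 * ε))) ≤
      prob (jointPMF (iidPMF P n) A)
        {p | (p.2, p.1) ∈ Gset (jointPMF (iidPMF P n) A) P i ε δhat} := by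
  have hδ : 0 ≤ δ := hA.nonneg i fun _ => P.support_nonempty.some
  have hdenom : 0 < 1 - exp (-ε) := sub_pos.2 (exp_lt_one_iff.2 (by linarith))
  exact le_trans (by linarith [div_nonneg (by linarith : 0 ≤ 2 * δ) hdenom.le])
    (stmt_9_general A ε δ δhat hε hδhat hA P i)
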